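/- Let n ≥ 3 be an integer and set d := n − 1. Let 1 ≤ p ≤ 2, 2 ≤ Q ≤ ∞, 1 ≤ r ≤ ∞, and assume n − 3 + 2/Q > 0. For slice-Schwartz functions f, g : ℝ^d × (0,∞) → ℂ define the remainder R(f, g)(x, t) := ∑_{k,ℓ ∈ ℤ, |k−ℓ| ≤ 2} (Δ_k f(·,t))(x) · (Δ_ℓ g(·,t))(x). Then there exists a constant C = C(n, p, Q, r) > 0 such that ‖R(f, g)‖_{L̃^{Q/2}(Ḃ^{n−3+2/Q}_{1, r})} ≤ C ‖f‖_{L̃^{Q}(Ḃ^{(n−1)/p + 1/Q − 1}_{p,r})} ‖g‖_{L̃^{Q}(Ḃ^{(n−1)/p + 1/Q − 1}_{p,r})} for all slice-Schwartz f, g. -/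

import Mathlib

/-!
Fattening a block to `Δ̃_k g = ∑_{|m| ≤ 2} Δ_{k+m} g` turns the remainder into the single sum
`∑_k Δ_k f · Δ̃_k g`. The product `Δ_k f · Δ̃_k g` has its spectrum in a ball of radius `~ 2^k`, so
only the terms with `k ≥ j - 4` survive in `Δ_j R(f, g)`. For each of them, Bernstein's inequality
puts `Δ_k f` in the Lebesgue space dual to that of `Δ̃_k g`, and Hölder's inequality in space and
time bounds the product at the cost of a power of `2^k`. Because the target regularity `s` is
positive, the factor `2^{s(j-k)}` is summable over `k ≥ j - 4`, so the sum over `k` is a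
convolution with a summable kernel, and Young's and Hölder's inequalities in `ℓ^r` finish the proof.
-/

open MeasureTheory Filter Complex
open scoped ENNReal NNReal RealInnerProductSpace Topology

noncomputable section

abbrev Rd (d : ℕ) := EuclideanSpace ℝ (Fin d)

/-- Fourier transform with the paper's convention `F[f](ξ) = ∫ e^{-i x·ξ} f(x) dx`. -/
def FT {d : ℕ} (f : Rd d → ℂ) (ξ : Rd d) : ℂ :=
  ∫ x : Rd d, Complex.exp (-Complex.I * (↑(⟪x, ξ⟫) : ℂ)) * f x

/-- A Littlewood–Paley family: a Schwartz function `φ₀` whose Fourier transform is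
real, takes values in `[0,1]`, is supported in the annulus `1/2 ≤ |ξ| ≤ 2`, and whose
dyadic dilates sum to `1` away from the origin. -/
structure LPData (d : ℕ) where
  φ : SchwartzMap (Rd d) ℂ
  him : ∀ ξ : Rd d, (FT (⇑φ) ξ).im = 0
  h0 : ∀ ξ : Rd d, 0 ≤ (FT (⇑φ) ξ).re
  h1 : ∀ ξ : Rd d, (FT (⇑φ) ξ).re ≤ 1
  hsupp : ∀ ξ : Rd d, FT (⇑φ) ξ ≠ 0 → (1/2 : ℝ) ≤ ‖ξ‖ ∧ ‖ξ‖ ≤ 2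
  hsum : ∀ ξ : Rd d, ξ ≠ 0 → HasSum (fun j : ℤ => FT (⇑φ) ((2:ℝ) ^ (-j) • ξ)) 1

/-- Littlewood–Paley block `Δ_j f = φ_j * f`, where `φ_j(x) = 2^{dj} φ₀(2^j x)`. -/
def LP {d : ℕ} (P : LPData d) (j : ℤ) (f : Rd d → ℂ) (x : Rd d) : ℂ :=
  ∫ y : Rd d, (((2:ℝ) ^ ((d : ℤ) * j) : ℝ) : ℂ) * P.φ ((2:ℝ) ^ j • y) * f (x - y)

/-- `ℓ^r(ℤ)`-norm of a family of extended nonnegative reals. -/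
def ellNorm (r : ℝ≥0∞) (a : ℤ → ℝ≥0∞) : ℝ≥0∞ :=
  if r = ∞ then ⨆ j, a j else (∑' j, a j ^ r.toReal) ^ (1 / r.toReal)

/-- Homogeneous Besov norm `‖f‖_{Ḃ^s_{p,r}}`. -/
def besov {d : ℕ} (P : LPData d) (s : ℝ) (p r : ℝ≥0∞) (f : Rd d → ℂ) : ℝ≥0∞ :=
  ellNorm r fun j => ENNReal.ofReal ((2:ℝ) ^ (s * (j:ℝ))) * eLpNorm (LP P j f) p volume

/-- Mixed norm `L^q_t(0,∞; L^p_x)`. -/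
def LqLp {d : ℕ} (q p : ℝ≥0∞) (g : ℝ → Rd d → ℂ) : ℝ≥0∞ :=
  if q = ∞ then essSup (fun t => eLpNorm (g t) p volume) (volume.restrict (Set.Ioi (0:ℝ)))
  else (∫⁻ t in Set.Ioi (0:ℝ), (eLpNorm (g t) p volume) ^ q.toReal) ^ (1 / q.toReal)

/-- Chemin–Lerner norm `‖f‖_{L̃^q(Ḃ^s_{p,r})}` on `ℝ^d × (0,∞)`. -/
def CL {d : ℕ} (P : LPData d) (s : ℝ) (q p r : ℝ≥0∞) (f : ℝ → Rd d → ℂ) : ℝ≥0∞ :=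
  ellNorm r fun j => ENNReal.ofReal ((2:ℝ) ^ (s * (j:ℝ))) * LqLp q p fun t => LP P j (f t)

/-- `f : ℝ^d × (0,∞) → ℂ` (curried as `f t x`) is slice-Schwartz: continuous on
`ℝ^d × (0,∞)` and Schwartz in `x` for each fixed `t > 0`. -/
def SliceSchwartz {d : ℕ} (f : ℝ → Rd d → ℂ) : Prop :=
  ContinuousOn (fun z : Rd d × ℝ => f z.2 z.1) (Set.univ ×ˢ Set.Ioi 0) ∧
  ∀ t : ℝ, 0 < t → ∃ g : SchwartzMap (Rd d) ℂ, f t = ⇑g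

/-! ### `L^p` norms of extended-nonnegative-valued functions -/

section ExtendedNonnegative

variable {α β ι : Type*} [MeasurableSpace α] [MeasurableSpace β] {μ : Measure α}

lemma eLpNorm_tsum_le [Countable ι] {q : ℝ≥0∞} (hq : 1 ≤ q) {F : ι → α → ℝ≥0∞}
    (hF : ∀ i, AEMeasurable (F i) μ) :
    eLpNorm (fun x => ∑' i, F i x) q μ ≤ ∑' i, eLpNorm (F i) q μ := by
  rcases eq_or_ne q ∞ with rfl | hqt
  · simp only [eLpNorm_exponent_top, eLpNormEssSup, enorm_eq_self]
    have hx : ∀ᵐ x ∂μ, ∀ i, F i x ≤ essSup (F i) μ :=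
      ae_all_iff.2 fun i => ENNReal.ae_le_essSup (F i)
    exact essSup_le_of_ae_le _ (hx.mono fun x hx => ENNReal.tsum_le_tsum hx)
  have hq0 : q ≠ 0 := (zero_lt_one.trans_le hq).ne'
  have hqr : 0 < q.toReal := ENNReal.toReal_pos hq0 hqt
  have hpartial (s : Finset ι) : ∫⁻ x, (∑ i ∈ s, F i x) ^ q.toReal ∂μ
      ≤ (∑' i, eLpNorm (F i) q μ) ^ q.toReal := by
    have h := (eLpNorm_sum_le (fun i _ => (hF i).aestronglyMeasurable) hq).trans
      (ENNReal.sum_le_tsum (f := fun i => eLpNorm (F i) q μ) s)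
    rw [eLpNorm_eq_lintegral_rpow_enorm_toReal hq0 hqt, one_div,
      ENNReal.rpow_inv_le_iff hqr] at h
    simpa only [enorm_eq_self, Finset.sum_apply] using h
  rw [eLpNorm_eq_lintegral_rpow_enorm_toReal hq0 hqt, one_div, ENNReal.rpow_inv_le_iff hqr]
  have hsup (x : α) : (∑' i, F i x) ^ q.toReal
      = ⨆ s : Finset ι, (∑ i ∈ s, F i x) ^ q.toReal := by
    rw [ENNReal.tsum_eq_iSup_sum]
    simpa only [ENNReal.orderIsoRpow_apply] using
      (ENNReal.orderIsoRpow q.toReal hqr).map_iSup fun s : Finset ι => ∑ i ∈ s, F i x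
  simp only [enorm_eq_self, hsup]
  rw [lintegral_iSup_directed]
  · exact iSup_le hpartial
  · exact fun s => (Finset.aemeasurable_fun_sum _ fun i _ => hF i).pow_const _
  · refine directed_of_isDirected_le fun s t hst x => ?_
    gcongr

lemma eLpNorm_mul_le {p q r : ℝ≥0∞} [hpqr : ENNReal.HolderTriple p q r] {a b : α → ℝ≥0∞}
    (ha : AEMeasurable a μ) (hb : AEMeasurable b μ) :
    eLpNorm (fun x => a x * b x) r μ ≤ eLpNorm a p μ * eLpNorm b q μ := by
  have hinv := hpqr.inv_add_inv_eq_inv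
  rcases eq_or_ne r 0 with rfl | hr0
  · simp
  have hp0 : p ≠ 0 := by rintro rfl; exact hr0 (by simpa using hinv.symm)
  have hq0 : q ≠ 0 := by rintro rfl; exact hr0 (by simpa using hinv.symm)
  rcases eq_or_ne p ∞ with rfl | hpt
  · obtain rfl : q = r := by simpa using hinv
    refine eLpNorm_le_mul_eLpNorm_of_ae_le_mul'' q hb.aestronglyMeasurable ?_
    filter_upwards [enorm_ae_le_eLpNormEssSup a μ] with x hx
    simpa only [enorm_eq_self, eLpNorm_exponent_top] using mul_le_mul_left hx (b x)
  rcases eq_or_ne q ∞ with rfl | hqt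
  · obtain rfl : p = r := by simpa using hinv
    rw [mul_comm]
    refine eLpNorm_le_mul_eLpNorm_of_ae_le_mul'' p ha.aestronglyMeasurable ?_
    filter_upwards [enorm_ae_le_eLpNormEssSup b μ] with x hx
    simpa only [enorm_eq_self, eLpNorm_exponent_top, mul_comm] using mul_le_mul_right hx (a x)
  have htriple := ENNReal.HolderTriple.toReal r (ENNReal.toReal_pos hp0 hpt)
    (ENNReal.toReal_pos hq0 hqt)
  have hrt : r ≠ ∞ := (ENNReal.toReal_pos_iff.1 htriple.pos').2.ne
  simp only [eLpNorm_eq_lintegral_rpow_enorm_toReal, hp0, hpt, hq0, hqt, hr0, hrt, ne_eq,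
    not_false_eq_true, enorm_eq_self]
  exact ENNReal.lintegral_Lp_mul_le_Lq_mul_Lr htriple.pos' htriple.lt
    (by simpa only [one_div] using htriple.inv_add_inv_eq_inv.symm) μ ha hb

lemma eLpNorm_le_rpow_mul_eLpNormEssSup_rpow {E : Type*} [NormedAddCommGroup E] {u : α → E}
    (hu : AEStronglyMeasurable u μ) {p q : ℝ≥0∞} (hp : p ≠ 0) (hpq : p ≤ q) :
    eLpNorm u q μ
      ≤ eLpNorm u p μ ^ (p.toReal / q.toReal) * eLpNormEssSup u μ ^ (1 - p.toReal / q.toReal) := by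
  rcases eq_or_ne q ∞ with rfl | hqt
  · simp
  have hq : q ≠ 0 := (hp.bot_lt.trans_le hpq).ne'
  have hpt : p ≠ ∞ := ne_top_of_le_ne_top hqt hpq
  have hp' : 0 < p.toReal := ENNReal.toReal_pos hp hpt
  have hpq' : 0 ≤ q.toReal - p.toReal := sub_nonneg.2 (ENNReal.toReal_mono hqt hpq)
  have hq' : 0 < q.toReal := ENNReal.toReal_pos hq hqt
  have hpow : ∫⁻ x, ‖u x‖ₑ ^ q.toReal ∂μ
      ≤ eLpNormEssSup u μ ^ (q.toReal - p.toReal) * ∫⁻ x, ‖u x‖ₑ ^ p.toReal ∂μ := by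
    rw [← lintegral_const_mul'' _ (hu.enorm.pow_const _)]
    refine lintegral_mono_ae ?_
    filter_upwards [enorm_ae_le_eLpNormEssSup u μ] with x hx
    calc ‖u x‖ₑ ^ q.toReal = ‖u x‖ₑ ^ (q.toReal - p.toReal) * ‖u x‖ₑ ^ p.toReal := by
          rw [← ENNReal.rpow_add_of_nonneg _ _ hpq' hp'.le, sub_add_cancel]
      _ ≤ _ := by gcongr
  calc eLpNorm u q μ = (∫⁻ x, ‖u x‖ₑ ^ q.toReal ∂μ) ^ q.toReal⁻¹ := by
        rw [eLpNorm_eq_lintegral_rpow_enorm_toReal hq hqt, one_div]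
    _ ≤ (eLpNormEssSup u μ ^ (q.toReal - p.toReal)
          * ∫⁻ x, ‖u x‖ₑ ^ p.toReal ∂μ) ^ q.toReal⁻¹ := by gcongr
    _ = _ := by
        rw [ENNReal.mul_rpow_of_nonneg _ _ (by positivity), ← ENNReal.rpow_mul, mul_comm,
          eLpNorm_eq_lintegral_rpow_enorm_toReal hp hpt, ← ENNReal.rpow_mul]
        congr 2 <;> field_simp

lemma measurable_eLpNorm_prodMk_left {E : Type*} [NormedAddCommGroup E] [MeasurableSpace E]
    [OpensMeasurableSpace E] {ν : Measure β} [SFinite ν] {F : α × β → E} (hF : Measurable F)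
    (p : ℝ≥0∞) : Measurable fun a => eLpNorm (fun b => F (a, b)) p ν := by
  rcases eq_or_ne p 0 with rfl | hp0
  · simp
  rcases eq_or_ne p ∞ with rfl | hpt
  · simp only [eLpNorm_exponent_top, eLpNormEssSup]
    refine measurable_of_Iic fun c => ?_
    have hmeas : Measurable fun a => ν (Prod.mk a ⁻¹' {z | c < ‖F z‖ₑ}) :=
      measurable_measure_prodMk_left (measurableSet_lt measurable_const hF.enorm)
    convert! hmeas (measurableSet_singleton 0) using 1
    ext a
    simp only [Set.mem_preimage, Set.mem_Iic, Set.mem_singleton_iff]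
    have hae : (∀ᵐ b ∂ν, ‖F (a, b)‖ₑ ≤ c) ↔ ν (Prod.mk a ⁻¹' {z | c < ‖F z‖ₑ}) = 0 := by
      simp only [ae_iff, not_le, Set.preimage_ofPred_eq]
    rw [← hae]
    exact ⟨fun h => (ENNReal.ae_le_essSup _).mono fun b hb => hb.trans h, essSup_le_of_ae_le c⟩
  · simp only [eLpNorm_eq_lintegral_rpow_enorm_toReal hp0 hpt]
    exact ((hF.enorm.pow_const _).lintegral_prod_right').pow_const _

end ExtendedNonnegative

section SequenceAndMixedNorms

variable {r : ℝ≥0∞}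

lemma ellNorm_eq_eLpNorm (hr : r ≠ 0) (a : ℤ → ℝ≥0∞) :
    ellNorm r a = eLpNorm a r Measure.count := by
  unfold ellNorm
  split_ifs with h
  · simp [h, eLpNormEssSup]
  · simp [eLpNorm_eq_lintegral_rpow_enorm_toReal hr h, lintegral_count]

lemma LqLp_eq_eLpNorm {d : ℕ} {q : ℝ≥0∞} (hq : q ≠ 0) (p : ℝ≥0∞) (g : ℝ → Rd d → ℂ) :
    LqLp q p g = eLpNorm (fun t => eLpNorm (g t) p volume) q (volume.restrict (Set.Ioi 0)) := by
  unfold LqLp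
  split_ifs with h
  · simp [h, eLpNormEssSup]
  · simp [eLpNorm_eq_lintegral_rpow_enorm_toReal hq h]

lemma ellNorm_mono {a b : ℤ → ℝ≥0∞} (h : ∀ j, a j ≤ b j) : ellNorm r a ≤ ellNorm r b := by
  unfold ellNorm
  split_ifs
  · exact iSup_mono h
  · gcongr
    exact h _

lemma ellNorm_comp_add_right (a : ℤ → ℝ≥0∞) (m : ℤ) :
    ellNorm r (fun j => a (j + m)) = ellNorm r a := by
  unfold ellNorm
  split_ifs
  · exact (Equiv.addRight m).iSup_comp
  · rw [← (Equiv.addRight m).tsum_eq fun j => a j ^ r.toReal]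
    rfl

lemma ellNorm_const_mul_le (hr : r ≠ 0) (c : ℝ≥0∞) (a : ℤ → ℝ≥0∞) :
    ellNorm r (fun j => c * a j) ≤ c * ellNorm r a := by
  simp only [ellNorm_eq_eLpNorm hr]
  exact eLpNorm_le_mul_eLpNorm_of_ae_le_mul'' r
    (measurable_of_countable a).aestronglyMeasurable (ae_of_all _ fun j => le_rfl)

lemma ellNorm_top_le (hr : r ≠ 0) (a : ℤ → ℝ≥0∞) : ellNorm ∞ a ≤ ellNorm r a := by
  rw [ellNorm_eq_eLpNorm hr, ellNorm, if_pos rfl]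
  exact iSup_le fun j => by simpa using enorm_le_eLpNorm_count a j hr

lemma ellNorm_mul_le {r₁ r₂ : ℝ≥0∞} [ENNReal.HolderTriple r₁ r₂ r] (hr₁ : r₁ ≠ 0) (hr₂ : r₂ ≠ 0)
    (hr : r ≠ 0) (a b : ℤ → ℝ≥0∞) :
    ellNorm r (fun j => a j * b j) ≤ ellNorm r₁ a * ellNorm r₂ b := by
  simp only [ellNorm_eq_eLpNorm, hr₁, hr₂, hr, ne_eq, not_false_eq_true]
  exact eLpNorm_mul_le (measurable_of_countable a).aemeasurable
    (measurable_of_countable b).aemeasurable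

lemma ellNorm_tsum_mul_comp_add_le {ι : Type*} [Countable ι] (hr : 1 ≤ r) (w : ι → ℝ≥0∞)
    (τ : ι → ℤ) (a : ℤ → ℝ≥0∞) :
    ellNorm r (fun j => ∑' i, w i * a (j + τ i)) ≤ (∑' i, w i) * ellNorm r a := by
  have hr0 : r ≠ 0 := (zero_lt_one.trans_le hr).ne'
  calc ellNorm r (fun j => ∑' i, w i * a (j + τ i))
      ≤ ∑' i, ellNorm r (fun j => w i * a (j + τ i)) := by
        simp only [ellNorm_eq_eLpNorm hr0]
        exact eLpNorm_tsum_le hr fun i => (measurable_of_countable _).aemeasurable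
    _ ≤ ∑' i, w i * ellNorm r a := by
        gcongr with i
        exact (ellNorm_const_mul_le hr0 _ _).trans_eq (by rw [ellNorm_comp_add_right a])
    _ = _ := ENNReal.tsum_mul_right

end SequenceAndMixedNorms

section DyadicWeights

/-- The weight `2^{sj}` of the Besov norms, as an extended nonnegative real. -/
def dyadicWeight (s : ℝ) (j : ℤ) : ℝ≥0∞ := ENNReal.ofReal ((2:ℝ) ^ (s * (j:ℝ)))

lemma dyadicWeight_ne_top (s : ℝ) (j : ℤ) : dyadicWeight s j ≠ ∞ := ENNReal.ofReal_ne_top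

lemma dyadicWeight_add_left (s s' : ℝ) (j : ℤ) :
    dyadicWeight (s + s') j = dyadicWeight s j * dyadicWeight s' j := by
  rw [dyadicWeight, dyadicWeight, dyadicWeight, ← ENNReal.ofReal_mul (by positivity),
    ← Real.rpow_add two_pos, add_mul]

lemma dyadicWeight_add_right (s : ℝ) (j m : ℤ) :
    dyadicWeight s (j + m) = dyadicWeight s j * dyadicWeight s m := by
  rw [dyadicWeight, dyadicWeight, dyadicWeight, ← ENNReal.ofReal_mul (by positivity),
    ← Real.rpow_add two_pos, ← mul_add, Int.cast_add]

lemma dyadicWeight_eq_mul_neg (s : ℝ) (j m : ℤ) :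
    dyadicWeight s j = dyadicWeight (-s) m * dyadicWeight s (j + m) := by
  rw [dyadicWeight_add_right, mul_left_comm, ← dyadicWeight_add_left, neg_add_cancel]
  simp [dyadicWeight]

lemma tsum_dyadicWeight_ne_top {s : ℝ} (hs : s < 0) (m : ℤ) :
    ∑' i : ℕ, dyadicWeight s (i - m) ≠ ∞ := by
  have hgeom (i : ℕ) : dyadicWeight s i = ENNReal.ofReal (2 ^ s) ^ i := by
    rw [dyadicWeight, ← ENNReal.ofReal_pow (by positivity), ← Real.rpow_natCast,
      ← Real.rpow_mul zero_le_two, Int.cast_natCast]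
  have hlt : ENNReal.ofReal ((2:ℝ) ^ s) < 1 :=
    ENNReal.ofReal_lt_one.2 (Real.rpow_lt_one_of_one_lt_of_neg one_lt_two hs)
  simp only [sub_eq_add_neg, dyadicWeight_add_right, hgeom]
  rw [ENNReal.tsum_mul_right, ENNReal.tsum_geometric]
  exact ENNReal.mul_ne_top (ENNReal.inv_ne_top.2 (tsub_pos_of_lt hlt).ne')
    (dyadicWeight_ne_top s (-m))

end DyadicWeights

/-! ### Fourier transforms and spectra -/

section Fourier

variable {d : ℕ}

lemma FT_eq_fourierIntegral (f : Rd d → ℂ) :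
    FT f = VectorFourier.fourierIntegral Real.probChar volume (innerₗ (Rd d)) f := by
  ext ξ
  simp only [FT, VectorFourier.fourierIntegral_probChar, innerₗ_apply_apply, smul_eq_mul]
  congr! 3 with x
  ring_nf

lemma FT_eq_fourier (f : Rd d → ℂ) (ξ : Rd d) :
    FT f ξ = FourierTransform.fourier f ((2 * Real.pi)⁻¹ • ξ) := by
  rw [FT, Real.fourier_eq']
  congr! 3 with x
  rw [real_inner_smul_right]
  push_cast
  field_simp

lemma continuous_FT {f : Rd d → ℂ} (hf : Integrable f) : Continuous (FT f) := by
  rw [FT_eq_fourierIntegral]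
  exact VectorFourier.fourierIntegral_continuous Real.continuous_probChar continuous_inner hf

lemma norm_FT_le (f : Rd d → ℂ) (ξ : Rd d) : ‖FT f ξ‖ ≤ ∫ x, ‖f x‖ := by
  rw [FT_eq_fourierIntegral]
  exact VectorFourier.norm_fourierIntegral_le_integral_norm ..

lemma enorm_FT_le (f : Rd d → ℂ) (ξ : Rd d) : ‖FT f ξ‖ₑ ≤ ∫⁻ x, ‖f x‖ₑ := by
  refine (enorm_integral_le_lintegral_enorm _).trans_eq (lintegral_congr fun x => ?_)
  rw [enorm_mul, ← ofReal_norm (Complex.exp _), Complex.norm_exp]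
  simp

lemma integral_mul_FT_eq_flip {f g : Rd d → ℂ} (hf : Integrable f) (hg : Integrable g) :
    ∫ y, f y * FT g y = ∫ ξ, FT f ξ * g ξ := by
  have hflip : (innerₗ (Rd d)).flip = innerₗ (Rd d) :=
    LinearMap.ext₂ fun x y => real_inner_comm x y
  simpa only [smul_eq_mul, hflip, ← FT_eq_fourierIntegral] using
    (VectorFourier.integral_fourierIntegral_smul_eq_flip Real.continuous_probChar
      (L := innerₗ (Rd d)) continuous_inner hf hg).symm

lemma FT_sub (f : Rd d → ℂ) (x y : Rd d) :
    FT f (y - x) = FT (fun ξ => Complex.exp (Complex.I * (⟪ξ, x⟫ : ℂ)) * f ξ) y := by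
  simp only [FT, ← mul_assoc, ← Complex.exp_add, inner_sub_right]
  congr! 4 with ξ
  push_cast
  ring

lemma integral_mul_FT_sub {K a : Rd d → ℂ} (hK : Integrable K) (ha : Integrable a) (x : Rd d) :
    ∫ y, K y * FT a (y - x) = FT (fun ξ => FT K ξ * a ξ) (-x) := by
  have hb : Integrable fun ξ => Complex.exp (Complex.I * (⟪ξ, x⟫ : ℂ)) * a ξ :=
    ha.bdd_mul (c := 1) (by fun_prop) (ae_of_all _ fun ξ => by
      rw [mul_comm, Complex.norm_exp_ofReal_mul_I])
  simp only [FT_sub]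
  rw [integral_mul_FT_eq_flip hK hb, FT]
  congr! 2 with ξ
  rw [inner_neg_right, mul_left_comm]
  push_cast
  ring_nf

/-- The `L¹`-normalized dilate `|c|^d φ(c y)`. The paper's `φ_j` is `dilate (2 ^ j) φ₀`. -/
def dilate (c : ℝ) (φ : Rd d → ℂ) (y : Rd d) : ℂ := ((|c| ^ d : ℝ) : ℂ) * φ (c • y)

lemma integrable_dilate {φ : Rd d → ℂ} (hφ : Integrable φ) {c : ℝ} (hc : c ≠ 0) :
    Integrable (dilate c φ) :=
  (hφ.comp_smul hc).const_mul _

lemma FT_dilate (φ : Rd d → ℂ) {c : ℝ} (hc : c ≠ 0) (ξ : Rd d) :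
    FT (dilate c φ) ξ = FT φ (c⁻¹ • ξ) := by
  have hscale := Measure.integral_comp_smul (volume : Measure (Rd d))
    (fun x => Complex.exp (-Complex.I * (⟪x, c⁻¹ • ξ⟫ : ℂ)) * φ x) c
  simp only [real_inner_smul_left, real_inner_smul_right, inv_mul_cancel_left₀ hc,
    finrank_euclideanSpace_fin] at hscale
  have hc' : |c| ^ d ≠ 0 := pow_ne_zero d (abs_ne_zero.2 hc)
  simp only [FT, dilate, mul_left_comm _ ((|c| ^ d : ℝ) : ℂ), real_inner_smul_right]
  rw [integral_const_mul, hscale, abs_inv, abs_pow, ← Complex.real_smul, smul_smul,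
    mul_inv_cancel₀ hc', one_smul]

lemma eLpNorm_dilate (φ : Rd d → ℂ) {c : ℝ} (hc : c ≠ 0) (q : ℝ≥0∞) :
    eLpNorm (dilate c φ) q volume
      = ENNReal.ofReal (|c| ^ (d * (1 - q⁻¹.toReal))) * eLpNorm φ q volume := by
  have hc' : 0 < |c| := abs_pos.2 hc
  have hmap : eLpNorm (fun y => φ (c • y)) q volume
      = ENNReal.ofReal (|c| ^ (-(d * q⁻¹.toReal))) * eLpNorm φ q volume := by
    have hpos : 0 < |(c ^ d)⁻¹| := abs_pos.2 (inv_ne_zero (pow_ne_zero d hc))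
    have h := (Homeomorph.smulOfNeZero c hc).measurableEmbedding.eLpNorm_map_measure
      (μ := (volume : Measure (Rd d))) (g := φ) (p := q)
    change eLpNorm φ q (Measure.map (c • ·) volume) = eLpNorm (φ ∘ (c • ·)) q volume at h
    rw [Measure.map_addHaar_smul _ hc, finrank_euclideanSpace_fin,
      eLpNorm_smul_measure_of_ne_zero (ENNReal.ofReal_pos.2 hpos).ne', smul_eq_mul,
      ENNReal.ofReal_rpow_of_pos hpos] at h
    rw [← Function.comp_def φ, ← h, abs_inv, abs_pow, Real.rpow_neg hc'.le, Real.rpow_mul hc'.le,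
      Real.rpow_natCast, Real.inv_rpow (by positivity), one_div, ENNReal.toReal_inv]
  have hsmul : dilate c φ = ((|c| ^ d : ℝ) : ℂ) • fun y => φ (c • y) := rfl
  rw [hsmul, eLpNorm_const_smul, hmap, ← mul_assoc, ← ofReal_norm, Complex.norm_real,
    Real.norm_of_nonneg (by positivity), ← ENNReal.ofReal_mul (by positivity),
    ← Real.rpow_natCast, ← Real.rpow_add hc']
  ring_nf

lemma exists_integrable_FT_neg_eq (g : SchwartzMap (Rd d) ℂ) :
    ∃ a : Rd d → ℂ, Integrable a ∧ ∀ x, g x = FT a (-x) := by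
  have hc : -(2 * Real.pi)⁻¹ ≠ 0 := by simp [Real.pi_ne_zero]
  refine ⟨dilate (-(2 * Real.pi)⁻¹) (FourierTransformInv.fourierInv g : SchwartzMap (Rd d) ℂ),
    integrable_dilate (SchwartzMap.integrable _) hc, fun x => ?_⟩
  rw [FT_dilate _ hc, FT_eq_fourier, ← SchwartzMap.fourier_coe,
    FourierTransform.fourier_fourierInv_eq, smul_smul, smul_neg, ← neg_smul]
  congr 1
  rw [inv_neg, inv_inv]
  field_simp
  simp

lemma exists_FT_eq_one_on_closedBall (c : ℝ) :
    ∃ h : SchwartzMap (Rd d) ℂ, ∀ ξ ∈ Metric.closedBall (0 : Rd d) c, FT h ξ = 1 := by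
  obtain ⟨b, hcb⟩ : ∃ b : ContDiffBump (0 : Rd d), c ≤ b.rIn :=
    ⟨⟨max c 1, max c 1 + 1, by positivity, by linarith⟩, le_max_left c 1⟩
  have hπ : 2 * Real.pi ≠ 0 := by positivity
  have hcompact : HasCompactSupport fun ξ : Rd d => (b ((2 * Real.pi) • ξ) : ℂ) :=
    (b.hasCompactSupport.comp_smul hπ).comp_left (g := ((↑) : ℝ → ℂ)) Complex.ofReal_zero
  have hb : ContDiff ℝ ((⊤ : ℕ∞) : WithTop ℕ∞) b := b.contDiff
  have hsmooth : ContDiff ℝ ((⊤ : ℕ∞) : WithTop ℕ∞) fun ξ : Rd d => (b ((2 * Real.pi) • ξ) : ℂ) :=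
    Complex.ofRealCLM.contDiff.comp (hb.comp (contDiff_const_smul _))
  obtain ⟨χ, hχ⟩ : ∃ χ : SchwartzMap (Rd d) ℂ, ∀ ξ, χ ξ = b ((2 * Real.pi) • ξ) :=
    ⟨hcompact.toSchwartzMap hsmooth, fun ξ => rfl⟩
  refine ⟨FourierTransformInv.fourierInv χ, fun ξ hξ => ?_⟩
  have hone : b ξ = 1 :=
    b.one_of_mem_closedBall (Metric.closedBall_subset_closedBall hcb hξ)
  rw [FT_eq_fourier, ← SchwartzMap.fourier_coe, FourierTransform.fourier_fourierInv_eq, hχ,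
    smul_smul, mul_inv_cancel₀ hπ, one_smul, hone, Complex.ofReal_one]

end Fourier

/-- `u = F⁻¹[a]`, up to normalization, for an integrable amplitude `a` supported in `s`. Taking
`s = Set.univ` gives the Wiener algebra. -/
def HasFourierSupportIn {d : ℕ} (s : Set (Rd d)) (u : Rd d → ℂ) : Prop :=
  ∃ a : Rd d → ℂ, Integrable a ∧ Function.support a ⊆ s ∧ ∀ x, u x = FT a (-x)

section FourierSupport

open scoped Convolution Pointwise

variable {d : ℕ} {s t : Set (Rd d)} {u v K : Rd d → ℂ}

namespace HasFourierSupportIn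

lemma of_schwartzMap (g : SchwartzMap (Rd d) ℂ) : HasFourierSupportIn Set.univ g := by
  obtain ⟨a, ha, hga⟩ := exists_integrable_FT_neg_eq g
  exact ⟨a, ha, Set.subset_univ _, hga⟩

lemma mono (hu : HasFourierSupportIn s u) (hst : s ⊆ t) : HasFourierSupportIn t u := by
  obtain ⟨a, ha, hs, hua⟩ := hu
  exact ⟨a, ha, hs.trans hst, hua⟩

lemma zero : HasFourierSupportIn s (0 : Rd d → ℂ) :=
  ⟨0, integrable_zero _ _ _, by simp, fun x => by simp [FT]⟩

lemma add (hu : HasFourierSupportIn s u) (hv : HasFourierSupportIn s v) :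
    HasFourierSupportIn s (u + v) := by
  obtain ⟨a, ha, hs, hua⟩ := hu
  obtain ⟨b, hb, ht, hvb⟩ := hv
  refine ⟨a + b, ha.add hb, (Function.support_add a b).trans (Set.union_subset hs ht), fun x => ?_⟩
  rw [Pi.add_apply, hua, hvb, FT_eq_fourierIntegral, FT_eq_fourierIntegral, FT_eq_fourierIntegral,
    VectorFourier.fourierIntegral_add Real.continuous_probChar continuous_inner ha hb,
    Pi.add_apply]

lemma sum {ι : Type*} {S : Finset ι} {w : ι → Rd d → ℂ}
    (hw : ∀ i ∈ S, HasFourierSupportIn s (w i)) : HasFourierSupportIn s (∑ i ∈ S, w i) :=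
  Finset.sum_induction w (HasFourierSupportIn s) (fun _ _ => add) zero hw

lemma mul (hu : HasFourierSupportIn s u) (hv : HasFourierSupportIn t v) :
    HasFourierSupportIn (s + t) (u * v) := by
  obtain ⟨a, ha, hs, hua⟩ := hu
  obtain ⟨b, hb, ht, hvb⟩ := hv
  refine ⟨a ⋆[ContinuousLinearMap.mul ℂ ℂ, volume] b, ha.integrable_convolution _ hb,
    (support_convolution_subset _).trans (Set.add_subset_add hs ht), fun x => ?_⟩
  simp only [Pi.mul_apply, hua, hvb, FT_eq_fourier]
  exact (Real.fourier_mul_convolution_eq ha hb _).symm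

lemma continuous (hu : HasFourierSupportIn s u) : Continuous u := by
  obtain ⟨a, ha, -, hua⟩ := hu
  exact funext hua ▸ (continuous_FT ha).comp continuous_neg

lemma integral_mul_comp_sub (hu : HasFourierSupportIn s u) (hK : Integrable K)
    (hKt : ∀ ξ ∉ t, FT K ξ = 0) : HasFourierSupportIn (s ∩ t) fun x => ∫ y, K y * u (x - y) := by
  obtain ⟨a, ha, hs, hua⟩ := hu
  refine ⟨fun ξ => FT K ξ * a ξ, ha.bdd_mul (continuous_FT hK).aestronglyMeasurable
    (ae_of_all _ (norm_FT_le K)), fun ξ hξ => ?_, fun x => ?_⟩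
  · exact ⟨hs (right_ne_zero_of_mul hξ), not_imp_comm.1 (hKt ξ) (left_ne_zero_of_mul hξ)⟩
  · simp only [hua, neg_sub, integral_mul_FT_sub hK ha]

lemma eq_zero (hu : HasFourierSupportIn ∅ u) : u = 0 := by
  obtain ⟨a, -, hs, hua⟩ := hu
  ext x
  simp [hua, Function.support_eq_empty_iff.1 (Set.subset_empty_iff.1 hs), FT]

lemma integral_mul_comp_sub_eq_self (hu : HasFourierSupportIn s u) (hK : Integrable K)
    (hKs : ∀ ξ ∈ s, FT K ξ = 1) (x : Rd d) : ∫ y, K y * u (x - y) = u x := by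
  obtain ⟨a, ha, hs, hua⟩ := hu
  simp only [hua, neg_sub, integral_mul_FT_sub hK ha]
  congr 1
  ext ξ
  by_cases hξ : a ξ = 0
  · rw [hξ, mul_zero]
  · rw [hKs ξ (hs hξ), one_mul]

end HasFourierSupportIn

end FourierSupport

/-! ### Bernstein's inequality -/

section Bernstein

variable {d : ℕ} {u h : Rd d → ℂ} {c R : ℝ} {p q : ℝ≥0∞}

lemma toReal_div_toReal_le_one (hpq : p ≤ q) : p.toReal / q.toReal ≤ 1 := by
  rcases eq_or_ne q ∞ with rfl | hq
  · simp
  · exact div_le_one_of_le₀ (ENNReal.toReal_mono hq hpq) ENNReal.toReal_nonneg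

lemma toReal_inv_mul_one_sub_toReal_div (hp : p ≠ 0) (hpq : p ≤ q) :
    p⁻¹.toReal * (1 - p.toReal / q.toReal) = p⁻¹.toReal - q⁻¹.toReal := by
  rw [mul_sub, mul_one, ENNReal.toReal_inv, ENNReal.toReal_inv]
  rcases eq_or_ne p ∞ with rfl | hp'
  · simp [top_le_iff.1 hpq]
  · rw [div_eq_mul_inv, inv_mul_cancel_left₀ (ENNReal.toReal_ne_zero.2 ⟨hp, hp'⟩)]

lemma toReal_inv_conjExponent (hp : 1 ≤ p) : p.conjExponent⁻¹.toReal = 1 - p⁻¹.toReal := by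
  have hdual := ENNReal.HolderConjugate.conjExponent hp
  rw [← ENNReal.HolderConjugate.one_sub_inv p p.conjExponent,
    ENNReal.toReal_sub_of_le (ENNReal.inv_le_one.2 hp) ENNReal.one_ne_top, ENNReal.toReal_one]

-- The kernel of the reproducing formula is `dilate R h`; Hölder's inequality puts it in the
-- space dual to `L^p`.
lemma HasFourierSupportIn.eLpNormEssSup_le
    (hu : HasFourierSupportIn (Metric.closedBall 0 (c * R)) u) (hR : 0 < R) (hh : Integrable h)
    (hh1 : ∀ ξ ∈ Metric.closedBall 0 c, FT h ξ = 1) (hp : 1 ≤ p) :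
    eLpNormEssSup u volume ≤ ENNReal.ofReal (R ^ (d * p⁻¹.toReal)) *
      eLpNorm h p.conjExponent volume * eLpNorm u p volume := by
  have hdual : p.conjExponent.HolderConjugate p :=
    (ENNReal.HolderConjugate.conjExponent hp).symm
  have hone : ∀ ξ ∈ Metric.closedBall 0 (c * R), FT (dilate R h) ξ = 1 := fun ξ hξ => by
    rw [FT_dilate h hR.ne']
    refine hh1 _ (mem_closedBall_zero_iff.2 ?_)
    rwa [norm_smul, norm_inv, Real.norm_of_nonneg hR.le, inv_mul_le_iff₀ hR, mul_comm R,
      ← mem_closedBall_zero_iff]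
  refine essSup_le_of_ae_le _ (ae_of_all _ fun x => ?_)
  have hreflect : MeasurePreserving (x - ·) (volume : Measure (Rd d)) volume :=
    Measure.measurePreserving_sub_left volume x
  calc ‖u x‖ₑ = ‖∫ y, dilate R h y * u (x - y)‖ₑ := by
        rw [hu.integral_mul_comp_sub_eq_self (integrable_dilate hh hR.ne') hone]
    _ ≤ eLpNorm (dilate R h • fun y => u (x - y)) 1 volume := by
        rw [eLpNorm_one_eq_lintegral_enorm]
        exact enorm_integral_le_lintegral_enorm _
    _ ≤ eLpNorm (dilate R h) p.conjExponent volume * eLpNorm (fun y => u (x - y)) p volume :=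
        eLpNorm_smul_le_mul_eLpNorm
          (hu.continuous.comp (continuous_sub_left x)).aestronglyMeasurable
          (integrable_dilate hh hR.ne').1
    _ = _ := by
        rw [eLpNorm_dilate h hR.ne', abs_of_pos hR, toReal_inv_conjExponent hp, sub_sub_cancel,
          ← Function.comp_def u,
          eLpNorm_comp_measurePreserving hu.continuous.aestronglyMeasurable hreflect]

lemma HasFourierSupportIn.eLpNorm_le_of_exponent_le
    (hu : HasFourierSupportIn (Metric.closedBall 0 (c * R)) u) (hR : 0 < R) (hh : Integrable h)
    (hh1 : ∀ ξ ∈ Metric.closedBall 0 c, FT h ξ = 1) (hp : 1 ≤ p) (hpq : p ≤ q) :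
    eLpNorm u q volume ≤ eLpNorm h p.conjExponent volume ^ (1 - p.toReal / q.toReal) *
      ENNReal.ofReal (R ^ (d * (p⁻¹.toReal - q⁻¹.toReal))) * eLpNorm u p volume := by
  have hp0 : p ≠ 0 := (zero_lt_one.trans_le hp).ne'
  set θ := p.toReal / q.toReal with hθ
  have hθ0 : 0 ≤ θ := by positivity
  have hθ1 : 0 ≤ 1 - θ := sub_nonneg.2 (toReal_div_toReal_le_one hpq)
  calc eLpNorm u q volume
      ≤ eLpNorm u p volume ^ θ * eLpNormEssSup u volume ^ (1 - θ) :=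
        eLpNorm_le_rpow_mul_eLpNormEssSup_rpow hu.continuous.aestronglyMeasurable hp0 hpq
    _ ≤ eLpNorm u p volume ^ θ * (ENNReal.ofReal (R ^ (d * p⁻¹.toReal)) *
          eLpNorm h p.conjExponent volume * eLpNorm u p volume) ^ (1 - θ) := by
        gcongr
        exact hu.eLpNormEssSup_le hR hh hh1 hp
    _ = eLpNorm h p.conjExponent volume ^ (1 - θ) *
          ENNReal.ofReal (R ^ (d * p⁻¹.toReal)) ^ (1 - θ) *
          (eLpNorm u p volume ^ θ * eLpNorm u p volume ^ (1 - θ)) := by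
        rw [ENNReal.mul_rpow_of_nonneg _ _ hθ1, ENNReal.mul_rpow_of_nonneg _ _ hθ1]
        ring
    _ = _ := by
        rw [← ENNReal.rpow_add_of_nonneg _ _ hθ0 hθ1, add_sub_cancel, ENNReal.rpow_one,
          ENNReal.ofReal_rpow_of_pos (by positivity), ← Real.rpow_mul hR.le, mul_assoc (d : ℝ),
          hθ, toReal_inv_mul_one_sub_toReal_div hp0 hpq]

lemma exists_bernstein (hp : 1 ≤ p) (hpq : p ≤ q) (c : ℝ) :
    ∃ B ≠ ∞, ∀ (k : ℤ) (u : Rd d → ℂ),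
      HasFourierSupportIn (Metric.closedBall 0 (c * 2 ^ k)) u →
      eLpNorm u q volume ≤
        B * dyadicWeight (d * (p⁻¹.toReal - q⁻¹.toReal)) k * eLpNorm u p volume := by
  obtain ⟨h, hh1⟩ := exists_FT_eq_one_on_closedBall (d := d) c
  refine ⟨_, ENNReal.rpow_ne_top_of_nonneg (sub_nonneg.2 (toReal_div_toReal_le_one hpq))
    (h.memLp p.conjExponent volume).eLpNorm_ne_top, fun k u hu => ?_⟩
  have hR : (0 : ℝ) < 2 ^ k := by positivity
  refine (hu.eLpNorm_le_of_exponent_le hR h.integrable hh1 hp hpq).trans_eq ?_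
  rw [dyadicWeight, ← Real.rpow_intCast, ← Real.rpow_mul zero_le_two, mul_comm (k : ℝ)]

end Bernstein

/-! ### Littlewood–Paley blocks -/

section LittlewoodPaley

variable {d : ℕ} (P : LPData d)

lemma LPData.norm_FT (ξ : Rd d) : ‖FT P.φ ξ‖ = (FT P.φ ξ).re := by
  have hre : FT P.φ ξ = ((FT P.φ ξ).re : ℂ) := Complex.ext (by simp) (by simp [P.him])
  rw [hre, Complex.norm_real, Complex.ofReal_re, Real.norm_of_nonneg (P.h0 ξ)]

lemma LPData.tsum_enorm_FT_le (ξ : Rd d) : ∑' k : ℤ, ‖FT P.φ ((2 : ℝ) ^ (-k) • ξ)‖ₑ ≤ 1 := by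
  simp only [← ofReal_norm, P.norm_FT]
  rcases eq_or_ne ξ 0 with rfl | hξ
  · have hzero : FT P.φ 0 = 0 := by
      by_contra h
      have := (P.hsupp 0 h).1
      norm_num at this
    simp [hzero]
  · have hsum := Complex.hasSum_re (P.hsum ξ hξ)
    rw [← ENNReal.ofReal_tsum_of_nonneg (fun k => P.h0 _) hsum.summable, hsum.tsum_eq]
    simp

lemma LP_eq_integral_dilate (j : ℤ) (u : Rd d → ℂ) (x : Rd d) :
    LP P j u x = ∫ y, dilate (2 ^ j) P.φ y * u (x - y) := by
  simp only [LP, dilate, abs_of_pos (zpow_pos (zero_lt_two' ℝ) j), ← zpow_natCast, ← zpow_mul,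
    mul_comm j]

lemma LPData.integrable_dilate (j : ℤ) : Integrable (dilate (2 ^ j) P.φ) :=
  _root_.integrable_dilate P.φ.integrable (by positivity)

lemma LPData.measurable_dilate (j : ℤ) : Measurable (dilate (2 ^ j) P.φ) := by
  have := P.φ.continuous
  exact Continuous.measurable (by unfold dilate; fun_prop)

lemma LPData.FT_dilate_two_zpow (j : ℤ) (ξ : Rd d) :
    FT (dilate (2 ^ j) P.φ) ξ = FT P.φ ((2 : ℝ) ^ (-j) • ξ) := by
  rw [FT_dilate _ (by positivity), zpow_neg]

lemma HasFourierSupportIn.LP_block {s : Set (Rd d)} {u : Rd d → ℂ} (hu : HasFourierSupportIn s u)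
    (j : ℤ) :
    HasFourierSupportIn (s ∩ {ξ | 2 ^ j / 2 ≤ ‖ξ‖ ∧ ‖ξ‖ ≤ 2 * 2 ^ j}) (LP P j u) := by
  rw [funext (LP_eq_integral_dilate P j u)]
  refine hu.integral_mul_comp_sub (P.integrable_dilate j) fun ξ => not_imp_comm.1 fun hξ => ?_
  rw [P.FT_dilate_two_zpow] at hξ
  have h := P.hsupp _ hξ
  have hj : (0 : ℝ) < 2 ^ j := by positivity
  rwa [norm_smul, norm_zpow, Real.norm_two, zpow_neg, inv_mul_eq_div, le_div_iff₀ hj,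
    div_le_iff₀ hj, one_div_mul_eq_div] at h

lemma HasFourierSupportIn.LP_eq_zero {s : Set (Rd d)} {u : Rd d → ℂ}
    (hu : HasFourierSupportIn s u) {j : ℤ} (hs : ∀ ξ ∈ s, ‖ξ‖ < 2 ^ j / 2) : LP P j u = 0 :=
  HasFourierSupportIn.eq_zero
    ((hu.LP_block P j).mono fun ξ hξ => (hs ξ hξ.1).not_ge hξ.2.1)

lemma HasFourierSupportIn.exists_tsum_enorm_LP_le {s : Set (Rd d)} {u : Rd d → ℂ}
    (hu : HasFourierSupportIn s u) : ∃ M ≠ ∞, ∀ x, ∑' k, ‖LP P k u x‖ₑ ≤ M := by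
  obtain ⟨a, ha, -, hua⟩ := hu
  have hLP : ∀ k x, LP P k u x = FT (fun ξ => FT P.φ ((2 : ℝ) ^ (-k) • ξ) * a ξ) (-x) := by
    intro k x
    simp only [LP_eq_integral_dilate, hua, neg_sub, integral_mul_FT_sub (P.integrable_dilate k) ha,
      P.FT_dilate_two_zpow]
  refine ⟨∫⁻ ξ, ‖a ξ‖ₑ, ha.2.ne, fun x => ?_⟩
  calc ∑' k, ‖LP P k u x‖ₑ
      ≤ ∑' k : ℤ, ∫⁻ ξ, ‖FT P.φ ((2 : ℝ) ^ (-k) • ξ)‖ₑ * ‖a ξ‖ₑ := by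
        simp only [hLP, ← enorm_mul]
        exact ENNReal.tsum_le_tsum fun k => enorm_FT_le _ _
    _ = ∫⁻ ξ, (∑' k : ℤ, ‖FT P.φ ((2 : ℝ) ^ (-k) • ξ)‖ₑ) * ‖a ξ‖ₑ := by
        simp only [← ENNReal.tsum_mul_right]
        refine (lintegral_tsum fun k => ?_).symm
        exact ((continuous_FT P.φ.integrable).comp
          (continuous_const_smul _)).enorm.aemeasurable.mul ha.1.enorm
    _ ≤ ∫⁻ ξ, ‖a ξ‖ₑ := lintegral_mono fun ξ => mul_le_of_le_one_left' (P.tsum_enorm_FT_le ξ)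

lemma measurable_uncurry_LP {T : Type*} [MeasurableSpace T] (j : ℤ) {f : T → Rd d → ℂ}
    (hf : Measurable (Function.uncurry f)) :
    Measurable (Function.uncurry fun t => LP P j (f t)) := by
  have hdil := P.measurable_dilate j
  have hm : Measurable fun z : (T × Rd d) × Rd d =>
      dilate (2 ^ j) P.φ z.2 * Function.uncurry f (z.1.1, z.1.2 - z.2) := by fun_prop
  simp only [Function.uncurry_def, LP_eq_integral_dilate]
  exact hm.stronglyMeasurable.integral_prod_right.measurable

lemma measurable_LP (j : ℤ) {u : Rd d → ℂ} (hu : Measurable u) : Measurable (LP P j u) :=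
  (measurable_uncurry_LP P j (f := fun _ : Unit => u) (hu.comp measurable_snd)).comp
    (measurable_prodMk_left (x := ()))

lemma eLpNorm_one_LP_le (j : ℤ) {u : Rd d → ℂ} (hu : Measurable u) :
    eLpNorm (LP P j u) 1 volume ≤ eLpNorm P.φ 1 volume * eLpNorm u 1 volume := by
  have hdil := P.measurable_dilate j
  have hmass : ∫⁻ y, ‖dilate (2 ^ j) P.φ y‖ₑ = eLpNorm P.φ 1 volume := by
    rw [← eLpNorm_one_eq_lintegral_enorm, eLpNorm_dilate _ (by positivity)]
    simp
  calc eLpNorm (LP P j u) 1 volume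
      ≤ ∫⁻ x, ∫⁻ y, ‖dilate (2 ^ j) P.φ y‖ₑ * ‖u (x - y)‖ₑ := by
        simp only [eLpNorm_one_eq_lintegral_enorm, LP_eq_integral_dilate, ← enorm_mul]
        exact lintegral_mono fun x => enorm_integral_le_lintegral_enorm _
    _ = ∫⁻ y, ‖dilate (2 ^ j) P.φ y‖ₑ * ∫⁻ x, ‖u (x - y)‖ₑ := by
        rw [lintegral_lintegral_swap (by fun_prop)]
        simp only [lintegral_const_mul' _ _ enorm_ne_top]
    _ = eLpNorm P.φ 1 volume * eLpNorm u 1 volume := by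
        simp only [lintegral_sub_right_eq_self fun x => ‖u x‖ₑ]
        rw [lintegral_mul_const _ hdil.enorm, hmass, ← eLpNorm_one_eq_lintegral_enorm]

lemma LP_tsum {ι : Type*} [Countable ι] (j : ℤ) {w : ι → Rd d → ℂ} (hw : ∀ i, Measurable (w i))
    {M : ℝ≥0∞} (hM : M ≠ ∞) (hwM : ∀ x, ∑' i, ‖w i x‖ₑ ≤ M) (x : Rd d) :
    LP P j (fun y => ∑' i, w i y) x = ∑' i, LP P j (w i) x := by
  have hdil := P.measurable_dilate j
  simp only [LP_eq_integral_dilate, ← tsum_mul_left]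
  refine integral_tsum (fun i => Measurable.aestronglyMeasurable (by fun_prop)) (ne_of_lt ?_)
  calc ∑' i, ∫⁻ y, ‖dilate (2 ^ j) P.φ y * w i (x - y)‖ₑ
      = ∫⁻ y, ‖dilate (2 ^ j) P.φ y‖ₑ * ∑' i, ‖w i (x - y)‖ₑ := by
        simp only [enorm_mul, ← ENNReal.tsum_mul_left]
        exact (lintegral_tsum fun i => by fun_prop).symm
    _ ≤ (∫⁻ y, ‖dilate (2 ^ j) P.φ y‖ₑ) * M := by
        rw [← lintegral_mul_const _ hdil.enorm]
        gcongr with y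
        exact hwM _
    _ < ∞ := ENNReal.mul_lt_top (P.integrable_dilate j).2 hM.lt_top

lemma eLpNorm_LP_tsum_le {ι : Type*} [Countable ι] (j : ℤ) {w : ι → Rd d → ℂ}
    (hw : ∀ i, Measurable (w i)) {M : ℝ≥0∞} (hM : M ≠ ∞) (hwM : ∀ x, ∑' i, ‖w i x‖ₑ ≤ M)
    {p : ℝ≥0∞} (hp : 1 ≤ p) :
    eLpNorm (LP P j fun x => ∑' i, w i x) p volume ≤ ∑' i, eLpNorm (LP P j (w i)) p volume := by
  calc eLpNorm (LP P j fun x => ∑' i, w i x) p volume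
      ≤ eLpNorm (fun x => ∑' i, ‖LP P j (w i) x‖ₑ) p volume := by
        refine eLpNorm_mono_enorm fun x => ?_
        rw [LP_tsum P j hw hM hwM, enorm_eq_self]
        exact enorm_tsum_le_tsum_enorm
    _ ≤ ∑' i, eLpNorm (LP P j (w i)) p volume := by
        simpa only [eLpNorm_enorm] using
          eLpNorm_tsum_le hp fun i => (measurable_LP P j (hw i)).enorm.aemeasurable

end LittlewoodPaley

/-! ### The remainder at a fixed time -/

/-- The fattened block `Δ̃_k = ∑_{|m| ≤ 2} Δ_{k+m}`. -/
def fatLP {d : ℕ} (P : LPData d) (k : ℤ) (v : Rd d → ℂ) : Rd d → ℂ :=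
  ∑ m ∈ Finset.Icc (-2 : ℤ) 2, LP P (k + m) v

/-- Bony's remainder `R(u, v) = ∑_{|k - ℓ| ≤ 2} Δ_k u · Δ_ℓ v`, as an iterated sum. -/
def remainder {d : ℕ} (P : LPData d) (u v : Rd d → ℂ) (x : Rd d) : ℂ :=
  ∑' k : ℤ, ∑' ℓ : {m : ℤ // |k - m| ≤ 2}, LP P k u x * LP P (ℓ : ℤ) v x

section Remainder

variable {d : ℕ} (P : LPData d) {u v : Rd d → ℂ}

lemma tsum_subtype_abs_sub_le (b : ℤ → ℂ) (k N : ℤ) :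
    ∑' ℓ : {m : ℤ // |k - m| ≤ N}, b ℓ = ∑ m ∈ Finset.Icc (-N) N, b (k + m) := by
  have hmem : ∀ m : ℤ, m ∈ Finset.Icc (k + -N) (k + N) ↔ |k - m| ≤ N := by
    intro m
    rw [Finset.mem_Icc, abs_le]
    omega
  rw [← (Equiv.subtypeEquivRight hmem).tsum_eq]
  simp only [Equiv.subtypeEquivRight_apply_coe]
  rw [Finset.tsum_subtype, ← Finset.map_add_left_Icc, Finset.sum_map]
  rfl

lemma remainder_eq_tsum_mul_fatLP (u v : Rd d → ℂ) :
    remainder P u v = fun x => ∑' k, (LP P k u * fatLP P k v) x := by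
  ext x
  simp only [remainder, fatLP, tsum_mul_left, tsum_subtype_abs_sub_le (fun ℓ => LP P ℓ v x),
    Pi.mul_apply, Finset.sum_apply]

lemma HasFourierSupportIn.LP_closedBall {s : Set (Rd d)} (hu : HasFourierSupportIn s u) (k : ℤ) :
    HasFourierSupportIn (Metric.closedBall 0 (2 * 2 ^ k)) (LP P k u) :=
  (hu.LP_block P k).mono fun _ hξ => mem_closedBall_zero_iff.2 hξ.2.2

lemma HasFourierSupportIn.fatLP_closedBall {s : Set (Rd d)} (hv : HasFourierSupportIn s v)
    (k : ℤ) : HasFourierSupportIn (Metric.closedBall 0 (8 * 2 ^ k)) (fatLP P k v) := by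
  refine HasFourierSupportIn.sum fun m hm => (hv.LP_closedBall P (k + m)).mono
    (Metric.closedBall_subset_closedBall ?_)
  calc (2 : ℝ) * 2 ^ (k + m) ≤ 2 * 2 ^ (k + 2) := by
        gcongr
        exacts [one_le_two, (Finset.mem_Icc.1 hm).2]
    _ = 8 * 2 ^ k := by
        rw [zpow_add₀ two_ne_zero]
        norm_num
        ring

-- The product has spectrum in `|ξ| ≤ 10 · 2^k`, while `Δ_j` only sees `|ξ| ≥ 16 · 2^k`.
lemma LP_LP_mul_fatLP_eq_zero {s t : Set (Rd d)} (hu : HasFourierSupportIn s u)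
    (hv : HasFourierSupportIn t v) {j k : ℤ} (hjk : k < j - 4) :
    LP P j (LP P k u * fatLP P k v) = 0 := by
  refine ((hu.LP_closedBall P k).mul (hv.fatLP_closedBall P k)).LP_eq_zero P fun ξ hξ => ?_
  obtain ⟨η, hη, ζ, hζ, rfl⟩ := hξ
  have hk : (0 : ℝ) < 2 ^ k := by positivity
  calc ‖η + ζ‖ ≤ 2 * 2 ^ k + 8 * 2 ^ k :=
        norm_add_le_of_le (mem_closedBall_zero_iff.1 hη) (mem_closedBall_zero_iff.1 hζ)
    _ < 2 ^ (k + 5) / 2 := by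
        rw [zpow_add₀ two_ne_zero]
        norm_num
        linarith
    _ ≤ 2 ^ j / 2 := by
        gcongr
        exacts [one_le_two, by omega]

lemma HasFourierSupportIn.exists_tsum_enorm_fatLP_le {s : Set (Rd d)}
    (hv : HasFourierSupportIn s v) : ∃ M ≠ ∞, ∀ x, ∑' k, ‖fatLP P k v x‖ₑ ≤ M := by
  obtain ⟨M, hM, hvM⟩ := hv.exists_tsum_enorm_LP_le P
  refine ⟨∑ _m ∈ Finset.Icc (-2 : ℤ) 2, M, by simp [hM, ENNReal.mul_ne_top], fun x => ?_⟩
  calc ∑' k, ‖fatLP P k v x‖ₑ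
      ≤ ∑' k, ∑ m ∈ Finset.Icc (-2 : ℤ) 2, ‖LP P (k + m) v x‖ₑ := by
        simp only [fatLP, Finset.sum_apply]
        exact ENNReal.tsum_le_tsum fun k => enorm_sum_le _ _
    _ = ∑ _m ∈ Finset.Icc (-2 : ℤ) 2, ∑' k, ‖LP P k v x‖ₑ := by
        rw [Summable.tsum_finsetSum fun _ _ => ENNReal.summable]
        exact Finset.sum_congr rfl fun m _ =>
          (Equiv.addRight m).tsum_eq fun k => ‖LP P k v x‖ₑ
    _ ≤ ∑ _m ∈ Finset.Icc (-2 : ℤ) 2, M := Finset.sum_le_sum fun _ _ => hvM x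

lemma exists_tsum_enorm_LP_mul_fatLP_le {s t : Set (Rd d)} (hu : HasFourierSupportIn s u)
    (hv : HasFourierSupportIn t v) :
    ∃ M ≠ ∞, ∀ x, ∑' k, ‖(LP P k u * fatLP P k v) x‖ₑ ≤ M := by
  obtain ⟨M, hM, huM⟩ := hu.exists_tsum_enorm_LP_le P
  obtain ⟨N, hN, hvN⟩ := hv.exists_tsum_enorm_fatLP_le P
  refine ⟨M * N, ENNReal.mul_ne_top hM hN, fun x => ?_⟩
  calc ∑' k, ‖(LP P k u * fatLP P k v) x‖ₑ
      ≤ ∑' k, ‖LP P k u x‖ₑ * N := by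
        refine ENNReal.tsum_le_tsum fun k => ?_
        rw [Pi.mul_apply, enorm_mul]
        gcongr
        exact (ENNReal.le_tsum k).trans (hvN x)
    _ ≤ M * N := by
        rw [ENNReal.tsum_mul_right]
        gcongr
        exact huM x

lemma tsum_int_eq_tsum_nat {a : ℤ → ℝ≥0∞} {j m : ℤ} (ha : ∀ k < j - m, a k = 0) :
    ∑' k, a k = ∑' i : ℕ, a (j + (i - m)) := by
  have hinj : Function.Injective fun i : ℕ => j + ((i : ℤ) - m) := fun _ _ h => by simpa using h
  refine (hinj.tsum_eq fun k hk => ?_).symm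
  have hle : j - m ≤ k := not_lt.1 fun h => hk (ha k h)
  exact ⟨(k - (j - m)).toNat, by dsimp only; omega⟩

lemma eLpNorm_one_LP_remainder_le {s t : Set (Rd d)} (hu : HasFourierSupportIn s u)
    (hv : HasFourierSupportIn t v) (j : ℤ) :
    eLpNorm (LP P j (remainder P u v)) 1 volume ≤ eLpNorm P.φ 1 volume *
      ∑' i : ℕ, eLpNorm (LP P (j + (i - 4)) u * fatLP P (j + (i - 4)) v) 1 volume := by
  obtain ⟨M, hM, huvM⟩ := exists_tsum_enorm_LP_mul_fatLP_le P hu hv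
  have hmeas : ∀ k, Measurable (LP P k u * fatLP P k v) := fun k =>
    ((hu.LP_closedBall P k).mul (hv.fatLP_closedBall P k)).continuous.measurable
  calc eLpNorm (LP P j (remainder P u v)) 1 volume
      ≤ ∑' k, eLpNorm (LP P j (LP P k u * fatLP P k v)) 1 volume := by
        rw [remainder_eq_tsum_mul_fatLP]
        exact eLpNorm_LP_tsum_le P j hmeas hM huvM le_rfl
    _ = ∑' i : ℕ, eLpNorm (LP P j (LP P (j + (i - 4)) u * fatLP P (j + (i - 4)) v)) 1 volume :=
        tsum_int_eq_tsum_nat fun k hk => by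
          rw [LP_LP_mul_fatLP_eq_zero P hu hv hk, eLpNorm_zero]
    _ ≤ _ := by
        rw [← ENNReal.tsum_mul_left]
        exact ENNReal.tsum_le_tsum fun i => eLpNorm_one_LP_le P j (hmeas _)

end Remainder

section RemainderBound

variable {d : ℕ} (P : LPData d) {p₁ p₂ : ℝ≥0∞}

-- Measure `Δ̃_k v` in `L^{p₂}`, hence `Δ_k u` in the dual space, where Bernstein's inequality
-- brings it from `L^{p₁}`.
lemma exists_eLpNorm_one_LP_mul_fatLP_le (hp₁ : 1 ≤ p₁) (hp₂ : 1 ≤ p₂)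
    (hp : 1 ≤ p₁⁻¹ + p₂⁻¹) :
    ∃ B ≠ ∞, ∀ (s t : Set (Rd d)) (u v : Rd d → ℂ), HasFourierSupportIn s u →
      HasFourierSupportIn t v → ∀ k, eLpNorm (LP P k u * fatLP P k v) 1 volume ≤
        B * dyadicWeight (d * (p₁⁻¹.toReal + p₂⁻¹.toReal - 1)) k *
          (eLpNorm (LP P k u) p₁ volume * eLpNorm (fatLP P k v) p₂ volume) := by
  have hdual : p₂.conjExponent.HolderConjugate p₂ :=
    (ENNReal.HolderConjugate.conjExponent hp₂).symm
  have hinv := ENNReal.HolderConjugate.inv_add_inv_eq_one p₂.conjExponent p₂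
  have hp₂' : p₂⁻¹ ≠ ∞ := ENNReal.inv_ne_top.2 (zero_lt_one.trans_le hp₂).ne'
  have hle : p₁ ≤ p₂.conjExponent := by
    rwa [← ENNReal.inv_le_inv, ← ENNReal.add_le_add_iff_right hp₂', hinv]
  have hexp : p₁⁻¹.toReal - p₂.conjExponent⁻¹.toReal = p₁⁻¹.toReal + p₂⁻¹.toReal - 1 := by
    rw [toReal_inv_conjExponent hp₂, sub_sub_eq_add_sub]
  obtain ⟨B, hB, hbernstein⟩ := exists_bernstein (d := d) hp₁ hle 2
  refine ⟨B, hB, fun s t u v hu hv k => ?_⟩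
  have huk := hu.LP_closedBall P k
  calc eLpNorm (LP P k u • fatLP P k v) 1 volume
      ≤ eLpNorm (LP P k u) p₂.conjExponent volume * eLpNorm (fatLP P k v) p₂ volume :=
        eLpNorm_smul_le_mul_eLpNorm (hv.fatLP_closedBall P k).continuous.aestronglyMeasurable
          huk.continuous.aestronglyMeasurable
    _ ≤ B * dyadicWeight (d * (p₁⁻¹.toReal - p₂.conjExponent⁻¹.toReal)) k *
          eLpNorm (LP P k u) p₁ volume * eLpNorm (fatLP P k v) p₂ volume := by
        gcongr
        exact hbernstein k _ huk
    _ = _ := by rw [hexp, mul_assoc]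

lemma exists_eLpNorm_one_LP_remainder_le (hp₁ : 1 ≤ p₁) (hp₂ : 1 ≤ p₂)
    (hp : 1 ≤ p₁⁻¹ + p₂⁻¹) :
    ∃ B ≠ ∞, ∀ (s t : Set (Rd d)) (u v : Rd d → ℂ), HasFourierSupportIn s u →
      HasFourierSupportIn t v → ∀ j, eLpNorm (LP P j (remainder P u v)) 1 volume ≤
        ∑' i : ℕ, B * dyadicWeight (d * (p₁⁻¹.toReal + p₂⁻¹.toReal - 1)) (j + (i - 4)) *
          (eLpNorm (LP P (j + (i - 4)) u) p₁ volume *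
            eLpNorm (fatLP P (j + (i - 4)) v) p₂ volume) := by
  obtain ⟨B, hB, hblock⟩ := exists_eLpNorm_one_LP_mul_fatLP_le P hp₁ hp₂ hp
  refine ⟨eLpNorm P.φ 1 volume * B, ENNReal.mul_ne_top (P.φ.memLp 1 volume).eLpNorm_ne_top hB,
    fun s t u v hu hv j => (eLpNorm_one_LP_remainder_le P hu hv j).trans ?_⟩
  rw [← ENNReal.tsum_mul_left]
  refine ENNReal.tsum_le_tsum fun i => ?_
  rw [mul_assoc (eLpNorm P.φ 1 volume), mul_assoc (eLpNorm P.φ 1 volume)]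
  gcongr
  exact hblock s t u v hu hv _

end RemainderBound

/-! ### Integration in time -/

section Time

variable {d : ℕ} (P : LPData d) {f g : ℝ → Rd d → ℂ} {p q : ℝ≥0∞}

namespace SliceSchwartz

lemma hasFourierSupportIn_univ (hf : SliceSchwartz f) {t : ℝ} (ht : 0 < t) :
    HasFourierSupportIn Set.univ (f t) := by
  obtain ⟨u, hu⟩ := hf.2 t ht
  exact hu ▸ HasFourierSupportIn.of_schwartzMap u

lemma exists_measurable_eq (hf : SliceSchwartz f) :
    ∃ F : ℝ → Rd d → ℂ, Measurable (Function.uncurry F) ∧ ∀ t, 0 < t → F t = f t := by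
  classical
  have hS : MeasurableSet (Set.univ ×ˢ Set.Ioi 0 : Set (Rd d × ℝ)) :=
    MeasurableSet.univ.prod measurableSet_Ioi
  set F : Rd d × ℝ → ℂ := (Set.univ ×ˢ Set.Ioi 0).piecewise (fun z => f z.2 z.1) fun _ => 0
  have hF : Measurable F := hf.1.measurable_piecewise continuousOn_const hS
  refine ⟨fun t x => F (x, t), hF.comp measurable_swap, fun t ht => funext fun x => ?_⟩
  exact Set.piecewise_eq_of_mem _ _ _ ⟨Set.mem_univ x, ht⟩

lemma aemeasurable_eLpNorm (hf : SliceSchwartz f) {A : (Rd d → ℂ) → Rd d → ℂ}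
    (hA : ∀ F : ℝ → Rd d → ℂ, Measurable (Function.uncurry F) →
      Measurable (Function.uncurry fun t => A (F t))) (p : ℝ≥0∞) :
    AEMeasurable (fun t => eLpNorm (A (f t)) p volume) (volume.restrict (Set.Ioi 0)) := by
  obtain ⟨F, hF, hFf⟩ := hf.exists_measurable_eq
  refine ⟨_, measurable_eLpNorm_prodMk_left (ν := volume) (hA F hF) p, ?_⟩
  filter_upwards [ae_restrict_mem measurableSet_Ioi] with t ht
  simp only [Function.uncurry_apply_pair, hFf t ht]

lemma aemeasurable_eLpNorm_LP (hf : SliceSchwartz f) (k : ℤ) (p : ℝ≥0∞) :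
    AEMeasurable (fun t => eLpNorm (LP P k (f t)) p volume) (volume.restrict (Set.Ioi 0)) :=
  hf.aemeasurable_eLpNorm (fun _ => measurable_uncurry_LP P k) p

lemma aemeasurable_eLpNorm_fatLP (hf : SliceSchwartz f) (k : ℤ) (p : ℝ≥0∞) :
    AEMeasurable (fun t => eLpNorm (fatLP P k (f t)) p volume) (volume.restrict (Set.Ioi 0)) := by
  refine hf.aemeasurable_eLpNorm (fun F hF => ?_) p
  simp only [Function.uncurry_def, fatLP, Finset.sum_apply]
  exact Finset.measurable_sum _ fun m _ => measurable_uncurry_LP P (k + m) hF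

end SliceSchwartz

lemma LqLp_le_eLpNorm (hq : q ≠ 0) {F : ℝ → ℝ≥0∞}
    (h : ∀ t, 0 < t → eLpNorm (g t) p volume ≤ F t) :
    LqLp q p g ≤ eLpNorm F q (volume.restrict (Set.Ioi 0)) := by
  rw [LqLp_eq_eLpNorm hq]
  refine eLpNorm_mono_enorm_ae ?_
  filter_upwards [ae_restrict_mem measurableSet_Ioi] with t ht
  exact h t ht

lemma LqLp_fatLP_le (hq : 1 ≤ q) (hp : 1 ≤ p) (hg : SliceSchwartz g) (k : ℤ) :
    LqLp q p (fun t => fatLP P k (g t)) ≤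
      ∑ m ∈ Finset.Icc (-2 : ℤ) 2, LqLp q p fun t => LP P (k + m) (g t) := by
  have hq0 : q ≠ 0 := (zero_lt_one.trans_le hq).ne'
  simp only [LqLp_eq_eLpNorm hq0 p fun t => LP P _ (g t)]
  refine le_trans ?_ (eLpNorm_sum_le
    (fun m _ => (hg.aemeasurable_eLpNorm_LP P (k + m) p).aestronglyMeasurable) hq)
  refine LqLp_le_eLpNorm hq0 fun t ht => ?_
  rw [Finset.sum_apply]
  exact eLpNorm_sum_le (fun m _ => ((hg.hasFourierSupportIn_univ ht).LP_closedBall P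
    (k + m)).continuous.aestronglyMeasurable) hp

lemma exists_LqLp_LP_remainder_le {p₁ p₂ q₁ q₂ : ℝ≥0∞} [ENNReal.HolderTriple q₁ q₂ q]
    (hp₁ : 1 ≤ p₁) (hp₂ : 1 ≤ p₂) (hp : 1 ≤ p₁⁻¹ + p₂⁻¹) (hq : 1 ≤ q) :
    ∃ B ≠ ∞, ∀ f g : ℝ → Rd d → ℂ, SliceSchwartz f → SliceSchwartz g → ∀ j,
      LqLp q 1 (fun t => LP P j (remainder P (f t) (g t))) ≤
        ∑' i : ℕ, B * dyadicWeight (d * (p₁⁻¹.toReal + p₂⁻¹.toReal - 1)) (j + (i - 4)) *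
          (LqLp q₁ p₁ (fun t => LP P (j + (i - 4)) (f t)) *
            LqLp q₂ p₂ fun t => fatLP P (j + (i - 4)) (g t)) := by
  obtain ⟨B, hB, hblock⟩ := exists_eLpNorm_one_LP_remainder_le P hp₁ hp₂ hp
  refine ⟨B, hB, fun f g hf hg j => ?_⟩
  have hq₁ : 1 ≤ q₁ := hq.trans (ENNReal.HolderTriple.le q₁ q₂ q)
  have hq₂ : 1 ≤ q₂ := hq.trans (ENNReal.HolderTriple.le q₂ q₁ q)
  have hfm := fun k => hf.aemeasurable_eLpNorm_LP P k p₁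
  have hgm := fun k => hg.aemeasurable_eLpNorm_fatLP P k p₂
  refine (LqLp_le_eLpNorm (zero_lt_one.trans_le hq).ne' fun t ht =>
    hblock _ _ _ _ (hf.hasFourierSupportIn_univ ht) (hg.hasFourierSupportIn_univ ht) j).trans ?_
  refine (eLpNorm_tsum_le hq fun i => ((hfm _).mul (hgm _)).const_mul _).trans ?_
  refine ENNReal.tsum_le_tsum fun i => ?_
  rw [LqLp_eq_eLpNorm (zero_lt_one.trans_le hq₁).ne',
    LqLp_eq_eLpNorm (zero_lt_one.trans_le hq₂).ne']
  refine (eLpNorm_le_mul_eLpNorm_of_ae_le_mul'' q ((hfm _).mul (hgm _)).aestronglyMeasurable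
    (ae_of_all _ fun t => le_rfl)).trans ?_
  gcongr
  exact eLpNorm_mul_le (hfm _) (hgm _)

end Time

/-! ### Summation over frequencies -/

section Summation

variable {d : ℕ} (P : LPData d)

lemma ellNorm_dyadicWeight_mul_LqLp_fatLP_le {p q r : ℝ≥0∞} (hp : 1 ≤ p) (hq : 1 ≤ q) (hr : 1 ≤ r)
    (σ : ℝ) {g : ℝ → Rd d → ℂ} (hg : SliceSchwartz g) :
    ellNorm r (fun k => dyadicWeight σ k * LqLp q p fun t => fatLP P k (g t)) ≤
      (∑ m ∈ Finset.Icc (-2 : ℤ) 2, dyadicWeight (-σ) m) * CL P σ q p r g := by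
  set a : ℤ → ℝ≥0∞ := fun k => dyadicWeight σ k * LqLp q p fun t => LP P k (g t)
  have hblock (k : ℤ) : (dyadicWeight σ k * LqLp q p fun t => fatLP P k (g t)) ≤
      ∑' m : Finset.Icc (-2 : ℤ) 2, dyadicWeight (-σ) m * a (k + m) := by
    rw [Finset.tsum_subtype (Finset.Icc (-2 : ℤ) 2) fun m => dyadicWeight (-σ) m * a (k + m)]
    refine (mul_le_mul_right (LqLp_fatLP_le P hq hp hg k) _).trans_eq ?_
    rw [Finset.mul_sum]
    refine Finset.sum_congr rfl fun m _ => ?_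
    rw [← mul_assoc, ← dyadicWeight_eq_mul_neg]
  refine (ellNorm_mono hblock).trans ((ellNorm_tsum_mul_comp_add_le hr _ _ a).trans_eq ?_)
  rw [Finset.tsum_subtype (Finset.Icc (-2 : ℤ) 2) fun m => dyadicWeight (-σ) m]
  rfl

lemma dyadicWeight_mul_mul_dyadicWeight_mul {s σ₁ σ₂ δ : ℝ} (hσ : σ₁ + σ₂ = s + δ) (j m : ℤ)
    (B x y : ℝ≥0∞) :
    dyadicWeight s j * (B * dyadicWeight δ (j + m) * (x * y)) =
      B * dyadicWeight (-s) m *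
        (dyadicWeight σ₁ (j + m) * x * (dyadicWeight σ₂ (j + m) * y)) := by
  have hweight : dyadicWeight s (j + m) * dyadicWeight δ (j + m) =
      dyadicWeight σ₁ (j + m) * dyadicWeight σ₂ (j + m) := by
    rw [← dyadicWeight_add_left, ← dyadicWeight_add_left, hσ]
  calc dyadicWeight s j * (B * dyadicWeight δ (j + m) * (x * y))
      = B * dyadicWeight (-s) m * (dyadicWeight s (j + m) * dyadicWeight δ (j + m)) * (x * y) := by
        rw [dyadicWeight_eq_mul_neg s j m]
        ring
    _ = _ := by
        rw [hweight]
        ring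

lemma exists_CL_remainder_le_mul_ellNorm_fatLP {p₁ p₂ q₁ q₂ q r₁ r₂ r : ℝ≥0∞}
    [ENNReal.HolderTriple q₁ q₂ q] [ENNReal.HolderTriple r₁ r₂ r] (hp₁ : 1 ≤ p₁) (hp₂ : 1 ≤ p₂)
    (hp : 1 ≤ p₁⁻¹ + p₂⁻¹) (hq : 1 ≤ q) (hr : 1 ≤ r) {s σ₁ σ₂ : ℝ} (hs : 0 < s)
    (hσ : σ₁ + σ₂ = s + d * (p₁⁻¹.toReal + p₂⁻¹.toReal - 1)) :
    ∃ W ≠ ∞, ∀ f g : ℝ → Rd d → ℂ, SliceSchwartz f → SliceSchwartz g →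
      CL P s q 1 r (fun t => remainder P (f t) (g t)) ≤ W * (CL P σ₁ q₁ p₁ r₁ f *
        ellNorm r₂ fun k => dyadicWeight σ₂ k * LqLp q₂ p₂ fun t => fatLP P k (g t)) := by
  obtain ⟨B, hB, hblock⟩ := exists_LqLp_LP_remainder_le P (q₁ := q₁) (q₂ := q₂) hp₁ hp₂ hp hq
  have hr₁ : 1 ≤ r₁ := hr.trans (ENNReal.HolderTriple.le r₁ r₂ r)
  have hr₂ : 1 ≤ r₂ := hr.trans (ENNReal.HolderTriple.le r₂ r₁ r)
  refine ⟨∑' i : ℕ, B * dyadicWeight (-s) (i - 4), ?_, fun f g hf hg => ?_⟩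
  · rw [ENNReal.tsum_mul_left]
    exact ENNReal.mul_ne_top hB (tsum_dyadicWeight_ne_top (neg_lt_zero.2 hs) 4)
  set a : ℤ → ℝ≥0∞ := fun k => dyadicWeight σ₁ k * LqLp q₁ p₁ fun t => LP P k (f t)
  set b : ℤ → ℝ≥0∞ := fun k => dyadicWeight σ₂ k * LqLp q₂ p₂ fun t => fatLP P k (g t)
  calc CL P s q 1 r (fun t => remainder P (f t) (g t))
      ≤ ellNorm r fun j => ∑' i : ℕ, B * dyadicWeight (-s) (i - 4) *
          (a (j + (i - 4)) * b (j + (i - 4))) := by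
        refine ellNorm_mono fun j => (mul_le_mul_right (hblock f g hf hg j) _).trans_eq ?_
        rw [← ENNReal.tsum_mul_left]
        exact tsum_congr fun i => dyadicWeight_mul_mul_dyadicWeight_mul hσ j _ _ _ _
    _ ≤ (∑' i : ℕ, B * dyadicWeight (-s) (i - 4)) * ellNorm r fun k => a k * b k :=
        ellNorm_tsum_mul_comp_add_le hr _ _ fun k => a k * b k
    _ ≤ (∑' i : ℕ, B * dyadicWeight (-s) (i - 4)) * (ellNorm r₁ a * ellNorm r₂ b) := by
        gcongr
        exact ellNorm_mul_le (zero_lt_one.trans_le hr₁).ne' (zero_lt_one.trans_le hr₂).ne'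
          (zero_lt_one.trans_le hr).ne' a b

lemma CL_top_le (s : ℝ) (q p : ℝ≥0∞) {r : ℝ≥0∞} (hr : r ≠ 0) (f : ℝ → Rd d → ℂ) :
    CL P s q p ∞ f ≤ CL P s q p r f :=
  ellNorm_top_le hr _

lemma holderTriple_self_self_div_two (q : ℝ≥0∞) : ENNReal.HolderTriple q q (q / 2) :=
  ⟨by rw [ENNReal.inv_div (by simp) (by simp), ← two_mul, div_eq_mul_inv]⟩

end Summation

theorem remainder_estimate_chemin_lerner_low_p_general {d : ℕ} (P : LPData d)
    {p₁ p₂ q₁ q₂ q r₁ r₂ r : ℝ≥0∞} [ENNReal.HolderTriple q₁ q₂ q] [ENNReal.HolderTriple r₁ r₂ r]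
    (hp₁ : 1 ≤ p₁) (hp₂ : 1 ≤ p₂) (hp : 1 ≤ p₁⁻¹ + p₂⁻¹) (hq : 1 ≤ q) (hr : 1 ≤ r)
    {s σ₁ σ₂ : ℝ} (hs : 0 < s) (hσ : σ₁ + σ₂ = s + d * (p₁⁻¹.toReal + p₂⁻¹.toReal - 1)) :
    ∃ C > (0 : ℝ), ∀ f g : ℝ → Rd d → ℂ, SliceSchwartz f → SliceSchwartz g →
      CL P s q 1 r (fun t => remainder P (f t) (g t)) ≤
        ENNReal.ofReal C * CL P σ₁ q₁ p₁ r₁ f * CL P σ₂ q₂ p₂ r₂ g := by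
  obtain ⟨W, hW, hsum⟩ := exists_CL_remainder_le_mul_ellNorm_fatLP P (q₁ := q₁) (q₂ := q₂)
    (r₁ := r₁) (r₂ := r₂) hp₁ hp₂ hp hq hr hs hσ
  set M := ∑ m ∈ Finset.Icc (-2 : ℤ) 2, dyadicWeight (-σ₂) m
  have hM : M ≠ ∞ := ENNReal.sum_ne_top.2 fun m _ => dyadicWeight_ne_top (-σ₂) m
  obtain ⟨C, hC, -⟩ := ENNReal.lt_iff_exists_nnreal_btwn.1 (ENNReal.mul_lt_top hW.lt_top hM.lt_top)
  have hC_pos : 0 < C := ENNReal.coe_pos.1 (pos_of_gt hC)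
  refine ⟨C, NNReal.coe_pos.2 hC_pos, fun f g hf hg => (hsum f g hf hg).trans ?_⟩
  have hfat := ellNorm_dyadicWeight_mul_LqLp_fatLP_le P hp₂
    (hq.trans (ENNReal.HolderTriple.le q₂ q₁ q)) (hr.trans (ENNReal.HolderTriple.le r₂ r₁ r)) σ₂ hg
  calc W * (CL P σ₁ q₁ p₁ r₁ f * _)
      ≤ W * (CL P σ₁ q₁ p₁ r₁ f * (M * CL P σ₂ q₂ p₂ r₂ g)) := by gcongr
    _ = W * M * CL P σ₁ q₁ p₁ r₁ f * CL P σ₂ q₂ p₂ r₂ g := by ring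
    _ ≤ ENNReal.ofReal C * CL P σ₁ q₁ p₁ r₁ f * CL P σ₂ q₂ p₂ r₂ g := by
        rw [ENNReal.ofReal_coe_nnreal]
        gcongr

/-- Remainder estimate, case `1 ≤ p ≤ 2`, `2 ≤ Q ≤ ∞`,
`n - 3 + 2/Q > 0`:
`‖R(f,g)‖_{L̃^{Q/2}(Ḃ^{n-3+2/Q}_{1,r})}
  ≤ C ‖f‖_{L̃^{Q}(Ḃ^{(n-1)/p+1/Q-1}_{p,r})} ‖g‖_{L̃^{Q}(Ḃ^{(n-1)/p+1/Q-1}_{p,r})}`. -/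
theorem remainder_estimate_chemin_lerner_low_p (n : ℕ) (hn : 3 ≤ n) (P : LPData (n-1))
    (p Q r : ℝ≥0∞) (hp1 : 1 ≤ p) (hp2 : p ≤ 2) (hQ : 2 ≤ Q) (hr : 1 ≤ r)
    (hpos : 0 < (n:ℝ) - 3 + 2 * (1/Q).toReal) :
    ∃ C > (0:ℝ), ∀ f g : ℝ → Rd (n-1) → ℂ, SliceSchwartz f → SliceSchwartz g →
      (∀ t : ℝ, 0 < t → ∀ x : Rd (n-1),
        Summable fun z : ℤ × ℤ =>
          if |z.1 - z.2| ≤ 2 then ‖LP P z.1 (f t) x * LP P z.2 (g t) x‖ else 0) →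
      CL P ((n:ℝ) - 3 + 2 * (1/Q).toReal) (Q / 2) 1 r
          (fun t x => ∑' k : ℤ, ∑' ℓ : {m : ℤ // |k - m| ≤ 2},
            LP P k (f t) x * LP P (ℓ : ℤ) (g t) x)
        ≤ ENNReal.ofReal C *
            CL P (((n:ℝ) - 1) * (1/p).toReal + (1/Q).toReal - 1) Q p r f *
            CL P (((n:ℝ) - 1) * (1/p).toReal + (1/Q).toReal - 1) Q p r g := by
  have hp : 1 ≤ p⁻¹ + p⁻¹ := ENNReal.inv_two_add_inv_two.ge.trans (by gcongr)
  have hQ_half : 1 ≤ Q / 2 := by rwa [ENNReal.le_div_iff_mul_le (by simp) (by simp), one_mul]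
  have := holderTriple_self_self_div_two Q
  obtain ⟨C, hC, hest⟩ := remainder_estimate_chemin_lerner_low_p_general P (q₁ := Q) (q₂ := Q)
    (r₁ := r) (r₂ := ∞) (σ₁ := (n - 1) * (1 / p).toReal + (1 / Q).toReal - 1)
    (σ₂ := (n - 1) * (1 / p).toReal + (1 / Q).toReal - 1) hp1 hp1 hp hQ_half hr hpos
    (by rw [Nat.cast_pred (by lia), one_div p]; ring)
  refine ⟨C, hC, fun f g hf hg _ => (hest f g hf hg).trans ?_⟩
  gcongr
  exact CL_top_le P _ Q p (zero_lt_one.trans_le hr).ne' g
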